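/- Let q be a prime power and n an odd integer with n > q+1 and n | q²−1. Let δ ∈ F_{q²}* \ F_q be an element of order n. Then the cyclic code C₁ = ⟨(x−δ^{−q})(x−δ^{−1})(x−δ)(x−δ^q)⟩ ⊆ F_q[x]/(x^n − 1) is an (n,6)_q MDS symbol-pair code; that is, C₁ has minimum pair-distance 6 and |C₁| = q^{n−4}. -/

import Mathlib

open Polynomial

/-- The pair-distance between two vectors indexed by `ZMod n`,
with indices taken modulo `n`. -/
def pairDist {n : ℕ} [NeZero n] {α : Type*} [DecidableEq α] (u v : ZMod n → α) : ℕ :=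
  (Finset.univ.filter fun i : ZMod n => (u i, u (i + 1)) ≠ (v i, v (i + 1))).card

/-- A finite subset of `ZMod n` consisting of (at least one) cyclically consecutive elements. -/
def IsArc {n : ℕ} (T : Finset (ZMod n)) : Prop :=
  ∃ (a : ZMod n) (k : ℕ), 0 < k ∧ T = (Finset.range k).image fun j : ℕ => a + (j : ZMod n)

/-- `L(S)`: the minimal number of parts in a partition of `S` into nonempty sets of
cyclically consecutive elements of `ZMod n`. -/
noncomputable def cycL {n : ℕ} (S : Finset (ZMod n)) : ℕ :=
  sInf {m | ∃ P : Finset (Finset (ZMod n)), P.card = m ∧ (∀ T ∈ P, IsArc T) ∧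
    (↑P : Set (Finset (ZMod n))).PairwiseDisjoint id ∧ P.sup id = S}

/-- The polynomial `∑ i, c i * x^i` associated to a vector `c` of length `n`. -/
noncomputable def polyOf {n : ℕ} [NeZero n] {F : Type*} [Semiring F] (c : ZMod n → F) :
    Polynomial F :=
  ∑ i : ZMod n, Polynomial.C (c i) * Polynomial.X ^ i.val

/-- `d` is the minimum pair-distance of the code `Code`. -/
def IsMinPairDist {n : ℕ} [NeZero n] {α : Type*} [DecidableEq α]
    (Code : Set (ZMod n → α)) (d : ℕ) : Prop :=
  (∀ u ∈ Code, ∀ v ∈ Code, u ≠ v → d ≤ pairDist u v) ∧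
    ∃ u ∈ Code, ∃ v ∈ Code, u ≠ v ∧ pairDist u v = d

/-- The coefficient `a₀(i) = ∑_{j=0}^{⌊(i−2)/2⌋} C(i−2−j, j) b^{i−2−2j} c^{j+1}`. -/
noncomputable def aCoeff0 {F : Type*} [Field F] (b c : F) (i : ℕ) : F :=
  ∑ j ∈ Finset.range ((i - 2) / 2 + 1),
    ((i - 2 - j).choose j : F) * b ^ (i - 2 - 2 * j) * c ^ (j + 1)

/-- The coefficient `a₁(i) = ∑_{j=0}^{⌊(i−1)/2⌋} C(i−1−j, j) b^{i−1−2j} c^{j}`. -/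
noncomputable def aCoeff1 {F : Type*} [Field F] (b c : F) (i : ℕ) : F :=
  ∑ j ∈ Finset.range ((i - 1) / 2 + 1),
    ((i - 1 - j).choose j : F) * b ^ (i - 1 - 2 * j) * c ^ j

/-! Frobenius permutes the four roots, so the generator has coefficients in `F_q`. The pair weight
of a vector is the size of its support plus the number of cyclic runs of the support. If this is at
most `5`, the support lies in four consecutive positions, which a multiple of a generator of degree
`4` excludes after a cyclic shift, or it consists of two adjacent positions and one more. In the
second case a shift gives a trinomial `a + b x + c x ^ j` vanishing at `δ` and `δ⁻¹`; the product of
the two equations reads `c² = a² + b² + a b (δ + δ⁻¹)`, and `δ + δ⁻¹ ∉ F_q` forces `a b = 0`. A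
nonzero binomial that is left would give `δ ^ (2 j) ∈ {1, δ²}`, which the odd order excludes.
Conversely, the generator itself is a codeword of pair weight at most `6`. -/

section Runs

variable {n : ℕ}

/-- The elements of `S` whose cyclic predecessor is not in `S`. When `S` is not all of `ZMod n`
there is one for each maximal run of consecutive elements, so their number is `cycL S`. -/
def runStarts (S : Finset (ZMod n)) : Finset (ZMod n) :=
  S.filter fun i => i - 1 ∉ S

lemma mem_runStarts {S : Finset (ZMod n)} {i : ZMod n} :
    i ∈ runStarts S ↔ i ∈ S ∧ i - 1 ∉ S :=
  Finset.mem_filter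

lemma runStarts_subset (S : Finset (ZMod n)) : runStarts S ⊆ S :=
  Finset.filter_subset _ _

lemma card_mem_or_add_one_mem [NeZero n] (S : Finset (ZMod n)) :
    (Finset.univ.filter fun i => i ∈ S ∨ i + 1 ∈ S).card = S.card + (runStarts S).card := by
  have hunion : (Finset.univ.filter fun i => i ∈ S ∨ i + 1 ∈ S) =
      S ∪ (runStarts S).image (· - 1) := by
    ext i
    simp only [Finset.mem_filter, Finset.mem_univ, true_and, Finset.mem_union, Finset.mem_image,
      mem_runStarts, sub_eq_iff_eq_add, exists_eq_right, add_sub_cancel_right]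
    tauto
  have hdisj : Disjoint S ((runStarts S).image (· - 1)) := by
    rw [Finset.disjoint_right]
    intro i hi
    obtain ⟨k, hk, rfl⟩ := Finset.mem_image.1 hi
    exact (mem_runStarts.1 hk).2
  rw [hunion, Finset.card_union_of_disjoint hdisj,
    Finset.card_image_of_injective _ sub_left_injective]

lemma exists_mem_runStarts_val_sub_lt {S : Finset (ZMod n)} (hS : S.card < n) {s : ZMod n}
    (hs : s ∈ S) : ∃ m ∈ runStarts S, (s - m).val < S.card := by
  have hinj : Set.InjOn (fun t : ℕ => s - (t : ZMod n)) (Finset.range (S.card + 1)) := by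
    intro a ha b hb hab
    simp only [Finset.coe_range, Set.mem_Iio] at ha hb
    have hval := congrArg ZMod.val (sub_right_injective hab)
    rwa [ZMod.val_natCast_of_lt (by lia), ZMod.val_natCast_of_lt (by lia)] at hval
  obtain ⟨e, he, heS⟩ := Finset.exists_mem_notMem_of_card_lt_card (s := S)
    (t := (Finset.range (S.card + 1)).image fun t : ℕ => s - (t : ZMod n))
    (by rw [Finset.card_image_of_injOn hinj, Finset.card_range]; exact Nat.lt_succ_self _)
  obtain ⟨t, ht, rfl⟩ := Finset.mem_image.1 he
  have hexit : ∃ t : ℕ, s - (t : ZMod n) ∉ S := ⟨t, heS⟩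
  obtain ⟨k, hk⟩ : ∃ k, Nat.find hexit = k + 1 :=
    Nat.exists_eq_succ_of_ne_zero fun h => Nat.find_spec hexit (by simpa [h] using hs)
  have hkS : s - (k : ZMod n) ∈ S := not_not.1 (Nat.find_min hexit (by lia : k < Nat.find hexit))
  have hk_lt : k < S.card := by
    have := (Nat.find_min' hexit heS).trans (Finset.mem_range_succ_iff.1 ht)
    lia
  refine ⟨s - k, mem_runStarts.2 ⟨hkS, ?_⟩, ?_⟩
  · simpa [hk, sub_sub] using Nat.find_spec hexit
  · rw [sub_sub_cancel, ZMod.val_natCast_of_lt (hk_lt.trans hS)]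
    exact hk_lt

lemma exists_subset_of_card_runStarts_eq_two (hn : 1 < n) {S : Finset (ZMod n)}
    (hR : (runStarts S).card = 2) (hS : S.card ≤ 3) :
    ∃ m j, j ≠ m ∧ j ≠ m + 1 ∧ S ⊆ {m, m + 1, j} := by
  have : Fact (1 < n) := ⟨hn⟩
  obtain ⟨a, b, hab, hR_eq⟩ := Finset.card_eq_two.1 hR
  have ha := mem_runStarts.1 (hR_eq ▸ Finset.mem_insert_self a {b})
  have hb := mem_runStarts.1 (hR_eq ▸ Finset.mem_insert_of_mem (Finset.mem_singleton_self b))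
  have hnonstart : (S \ runStarts S).card ≤ 1 := by
    rw [Finset.card_sdiff_of_subset (runStarts_subset S)]
    lia
  have hpred : ∀ i ∈ S, i ∉ runStarts S → i - 1 = a ∨ i - 1 = b := by
    intro i hi hiR
    have hi' : i - 1 ∈ S := by simpa [mem_runStarts, hi] using hiR
    suffices i - 1 ∈ runStarts S by simpa [hR_eq] using this
    by_contra hpR
    exact one_ne_zero (sub_eq_self.1 (Finset.card_le_one.1 hnonstart _
      (Finset.mem_sdiff.2 ⟨hi', hpR⟩) _ (Finset.mem_sdiff.2 ⟨hi, hiR⟩)))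
  have hne : ∀ {x y : ZMod n}, x ∈ S → y - 1 ∉ S → y ≠ x + 1 := by
    rintro x y hx hy rfl
    exact hy (by simpa using hx)
  by_cases ha' : a + 1 ∈ S
  · refine ⟨a, b, hab.symm, hne ha.1 hb.2, fun i hi => ?_⟩
    by_cases hiR : i ∈ runStarts S
    · rw [hR_eq] at hiR
      simp only [Finset.mem_insert, Finset.mem_singleton] at hiR ⊢
      tauto
    · have ha'R : a + 1 ∉ runStarts S := by simp [mem_runStarts, ha.1]
      have := Finset.card_le_one.1 hnonstart _ (Finset.mem_sdiff.2 ⟨hi, hiR⟩) _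
        (Finset.mem_sdiff.2 ⟨ha', ha'R⟩)
      simp [this]
  · refine ⟨b, a, hab, hne hb.1 ha.2, fun i hi => ?_⟩
    by_cases hiR : i ∈ runStarts S
    · rw [hR_eq] at hiR
      simp only [Finset.mem_insert, Finset.mem_singleton] at hiR ⊢
      tauto
    · have hia : i - 1 ≠ a := fun h => ha' (h ▸ (sub_add_cancel i 1).symm ▸ hi)
      simp [← (hpred i hi hiR).resolve_left hia]

lemma window_or_adjacent_pair_of_card_le_five (hn : 5 < n) {S : Finset (ZMod n)}
    (hS : S.Nonempty) (hcard : S.card + (runStarts S).card ≤ 5) :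
    (∃ m, ∀ i ∈ S, (i - m).val < 4) ∨ ∃ m j, j ≠ m ∧ j ≠ m + 1 ∧ S ⊆ {m, m + 1, j} := by
  have hSn : S.card < n := by lia
  have hpos : 0 < (runStarts S).card := by
    obtain ⟨s, hs⟩ := hS
    obtain ⟨m, hm, -⟩ := exists_mem_runStarts_val_sub_lt hSn hs
    exact Finset.card_pos.2 ⟨m, hm⟩
  have hle := Finset.card_le_card (runStarts_subset S)
  obtain hone | htwo : (runStarts S).card = 1 ∨ (runStarts S).card = 2 := by lia
  · obtain ⟨m, hm⟩ := Finset.card_eq_one.1 hone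
    refine .inl ⟨m, fun i hi => ?_⟩
    obtain ⟨m', hm', hlt⟩ := exists_mem_runStarts_val_sub_lt hSn hi
    obtain rfl : m' = m := by simpa [hm] using hm'
    lia
  · exact .inr (exists_subset_of_card_runStarts_eq_two (by lia) htwo (by lia))

end Runs

section PairDistance

variable {n : ℕ} [NeZero n] {α : Type*} [DecidableEq α]

lemma pairDist_zero_right [Zero α] (c : ZMod n → α) :
    pairDist c 0 = (Finset.univ.filter fun i => c i ≠ 0).card +
      (runStarts (Finset.univ.filter fun i => c i ≠ 0)).card := by
  rw [← card_mem_or_add_one_mem]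
  unfold pairDist
  congr 1
  ext i
  simp only [Pi.zero_apply, ne_eq, Prod.mk.injEq, Finset.mem_filter, Finset.mem_univ, true_and]
  tauto

variable [AddGroup α]

lemma pairDist_eq_pairDist_sub_zero (u v : ZMod n → α) : pairDist u v = pairDist (u - v) 0 := by
  simp [pairDist, sub_eq_zero]

lemma isMinPairDist_of_forall_le {𝓢 : Type*} [SetLike 𝓢 (ZMod n → α)]
    [AddSubgroupClass 𝓢 (ZMod n → α)] {K : 𝓢} {d : ℕ}
    (hle : ∀ c ∈ K, c ≠ 0 → d ≤ pairDist c 0) (hex : ∃ c ∈ K, c ≠ 0 ∧ pairDist c 0 ≤ d) :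
    IsMinPairDist (K : Set (ZMod n → α)) d := by
  refine ⟨fun u hu v hv huv => ?_, ?_⟩
  · rw [pairDist_eq_pairDist_sub_zero]
    exact hle _ (sub_mem hu hv) (sub_ne_zero.2 huv)
  · obtain ⟨c, hc, hc0, hcd⟩ := hex
    exact ⟨c, hc, 0, zero_mem K, hc0, hcd.antisymm (hle c hc hc0)⟩

end PairDistance

section PolyOf

variable {n : ℕ} [NeZero n] {R : Type*} [CommRing R]

lemma coeff_polyOf (c : ZMod n → R) (i : ZMod n) : (polyOf c).coeff i.val = c i := by
  simp [polyOf, coeff_C_mul, coeff_X_pow, (ZMod.val_injective n).eq_iff]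

lemma polyOf_injective : Function.Injective (polyOf : (ZMod n → R) → R[X]) := by
  intro c c' h
  ext i
  rw [← coeff_polyOf c, h, coeff_polyOf]

lemma polyOf_zero : polyOf (0 : ZMod n → R) = 0 := by
  simp [polyOf]

lemma degree_polyOf_lt {k : ℕ} {c : ZMod n → R} (hc : ∀ i, c i ≠ 0 → i.val < k) :
    (polyOf c).degree < k := by
  refine mem_degreeLT.1 (Submodule.sum_mem _ fun i _ => ?_)
  by_cases hi : c i = 0
  · simp [hi]
  · exact mem_degreeLT.2 ((degree_C_mul_X_pow_le _ _).trans_lt (by exact_mod_cast hc i hi))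

lemma polyOf_coeff {p : R[X]} (hp : p.degree < n) :
    polyOf (fun i : ZMod n => p.coeff i.val) = p := by
  ext k
  by_cases hk : k < n
  · simpa [ZMod.val_natCast_of_lt hk] using
      coeff_polyOf (fun i : ZMod n => p.coeff i.val) (k : ZMod n)
  · have hkn : (n : WithBot ℕ) ≤ k := by exact_mod_cast not_lt.1 hk
    rw [coeff_eq_zero_of_degree_lt (hp.trans_le hkn), coeff_eq_zero_of_degree_lt]
    exact (degree_polyOf_lt fun i _ => ZMod.val_lt i).trans_le hkn

variable {A : Type*} [CommRing A] [Algebra R A] {x : A}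

lemma aeval_polyOf (x : A) (c : ZMod n → R) :
    aeval x (polyOf c) = ∑ i : ZMod n, c i • x ^ i.val := by
  simp [polyOf, Algebra.smul_def]

lemma pow_val_add_of_pow_eq_one (hx : x ^ n = 1) (i j : ZMod n) :
    x ^ (i + j).val = x ^ i.val * x ^ j.val := by
  rw [ZMod.val_add, ← pow_add, ← pow_eq_pow_mod _ hx]

lemma pow_val_mul_aeval_polyOf_shift (hx : x ^ n = 1) (c : ZMod n → R) (m : ZMod n) :
    x ^ m.val * aeval x (polyOf fun i => c (i + m)) = aeval x (polyOf c) := by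
  rw [aeval_polyOf, aeval_polyOf, Finset.mul_sum]
  refine Fintype.sum_equiv (Equiv.addRight m) _ _ fun i => ?_
  rw [Equiv.coe_addRight, pow_val_add_of_pow_eq_one hx, mul_smul_comm, mul_comm]

lemma aeval_polyOf_shift_eq_zero_iff (hx : x ^ n = 1) (c : ZMod n → R) (m : ZMod n) :
    aeval x (polyOf fun i => c (i + m)) = 0 ↔ aeval x (polyOf c) = 0 := by
  rw [← pow_val_mul_aeval_polyOf_shift hx c m,
    ((IsUnit.of_pow_eq_one hx (NeZero.ne n)).pow _).mul_right_eq_zero]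

end PolyOf

section CyclicCode

variable {n : ℕ} [NeZero n] {R : Type*} [CommRing R] {g : R[X]}

variable (n g) in
/-- The cyclic code `⟨g⟩` of length `n`: the vectors whose polynomial is a multiple of `g`.
It is the ideal generated by `g` in `R[x]/(x^n - 1)`, and closed under cyclic shifts, only when
`g ∣ x^n - 1`, which is not part of the definition. -/
noncomputable def cyclicCode : Submodule R (ZMod n → R) where
  carrier := {c | g ∣ polyOf c}
  zero_mem' := by simp [polyOf_zero]
  add_mem' {a b} ha hb := by
    simpa [polyOf, add_mul, Finset.sum_add_distrib] using dvd_add ha hb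
  smul_mem' r c hc := by
    simpa [polyOf, mul_assoc, Finset.mul_sum] using hc.mul_left (C r)

lemma mem_cyclicCode {c : ZMod n → R} : c ∈ cyclicCode n g ↔ g ∣ polyOf c :=
  Iff.rfl

lemma mul_coeff_mem_cyclicCode {p : R[X]} (hp : (g * p).degree < n) :
    (fun i : ZMod n => (g * p).coeff i.val) ∈ cyclicCode n g := by
  rw [mem_cyclicCode, polyOf_coeff hp]
  exact dvd_mul_right g p

lemma shift_mem_cyclicCode_iff (hg : g ∣ X ^ n - 1) (c : ZMod n → R) (m : ZMod n) :
    (fun i => c (i + m)) ∈ cyclicCode n g ↔ c ∈ cyclicCode n g := by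
  have hroot : AdjoinRoot.root g ^ n = 1 := by
    simpa [sub_eq_zero] using AdjoinRoot.mk_eq_zero.2 hg
  simpa [mem_cyclicCode, AdjoinRoot.aeval_eq, AdjoinRoot.mk_eq_zero] using
    aeval_polyOf_shift_eq_zero_iff hroot c m

lemma eq_zero_of_mem_cyclicCode_of_window (hg : g ∣ X ^ n - 1) (hmonic : g.Monic)
    {c : ZMod n → R} (hc : c ∈ cyclicCode n g) {m : ZMod n}
    (hm : ∀ i, c i ≠ 0 → (i - m).val < g.natDegree) : c = 0 := by
  nontriviality R
  have hshift : polyOf (fun i => c (i + m)) = 0 := by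
    by_contra hne
    refine hmonic.not_dvd_of_degree_lt hne ?_ ((shift_mem_cyclicCode_iff hg c m).2 hc)
    rw [degree_eq_natDegree hmonic.ne_zero]
    exact degree_polyOf_lt fun i hi => by simpa using hm _ hi
  ext i
  simpa using congrFun (polyOf_injective (hshift.trans polyOf_zero.symm)) (i - m)

theorem natCard_cyclicCode (hmonic : g.Monic) (hdeg : g.natDegree ≤ n) :
    Nat.card (cyclicCode n g) = Nat.card R ^ (n - g.natDegree) := by
  nontriviality R
  have hdeg_mul (p : R[X]) : (g * p).degree < n ↔ p.degree < (n - g.natDegree : ℕ) := by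
    obtain rfl | hp := eq_or_ne p 0
    · simp
    · rw [← natDegree_lt_iff_degree_lt hp,
        ← natDegree_lt_iff_degree_lt (hmonic.mul_right_eq_zero_iff.not.2 hp),
        hmonic.natDegree_mul' hp]
      lia
  let encode (p : degreeLT R (n - g.natDegree)) : cyclicCode n g :=
    ⟨_, mul_coeff_mem_cyclicCode ((hdeg_mul p).2 (mem_degreeLT.1 p.2))⟩
  have hencode (p) : polyOf (encode p).1 = g * p :=
    polyOf_coeff ((hdeg_mul p).2 (mem_degreeLT.1 p.2))
  have hbij : Function.Bijective encode := by
    refine ⟨fun p p' h => Subtype.ext (hmonic.isRegular.left ?_), fun ⟨c, p, hp⟩ => ?_⟩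
    · simpa only [hencode] using congrArg (fun c => polyOf c.1) h
    · have hp_mem : p ∈ degreeLT R (n - g.natDegree) :=
        mem_degreeLT.2 ((hdeg_mul p).1 (hp ▸ degree_polyOf_lt fun i _ => ZMod.val_lt i))
      exact ⟨⟨p, hp_mem⟩, Subtype.ext (polyOf_injective ((hencode _).trans hp.symm))⟩
  rw [← Nat.card_eq_of_bijective encode hbij, Nat.card_congr (degreeLTEquiv R _).toEquiv,
    Nat.card_fun, Nat.card_fin]

lemma exists_mem_cyclicCode_pairDist_le [DecidableEq R] (hg : g ≠ 0) (hdeg : g.natDegree < n) :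
    ∃ c ∈ cyclicCode n g, c ≠ 0 ∧ pairDist c 0 ≤ g.natDegree + 2 := by
  have hlt : g.degree < n := (natDegree_lt_iff_degree_lt hg).1 hdeg
  refine ⟨fun i => g.coeff i.val, by simpa using mul_coeff_mem_cyclicCode (p := 1) (by simpa),
    fun h => hg ?_, ?_⟩
  · rw [← polyOf_coeff hlt, h, polyOf_zero]
  · rw [← Finset.card_range (g.natDegree + 2)]
    refine (Finset.card_le_card ?_).trans
      (Finset.card_image_le (f := fun t : ℕ => (t : ZMod n) - 1))
    intro i hi
    have hsupp {k : ZMod n} (hk : g.coeff k.val ≠ 0) : k.val ≤ g.natDegree :=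
      le_natDegree_of_ne_zero hk
    simp only [Pi.zero_apply, ne_eq, Prod.mk.injEq, Finset.mem_filter, Finset.mem_univ,
      true_and, not_and_or] at hi
    rw [Finset.mem_image]
    obtain hi | hi := hi
    · exact ⟨i.val + 1, by have := hsupp hi; simp; lia, by simp⟩
    · exact ⟨(i + 1).val, by have := hsupp hi; simp; lia, by simp⟩

end CyclicCode

section Trinomials

variable {F E : Type*} [Field F] [Field E] [Algebra F E]

lemma trinomial_coeff_eq_zero {x y : E} (hx0 : x ≠ 0) (hy0 : y ≠ 0)
    (hx : x + x⁻¹ ∉ Set.range (algebraMap F E)) (hy : y ^ 2 ≠ 1) (hyx : y ^ 2 ≠ x ^ 2)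
    {a b c : F} (h : a • (1 : E) + b • x + c • y = 0)
    (hinv : a • (1 : E) + b • x⁻¹ + c • y⁻¹ = 0) : a = 0 ∧ b = 0 ∧ c = 0 := by
  have halg {z : F} : algebraMap F E z = 0 ↔ z = 0 := by simp
  simp only [Algebra.smul_def, mul_one] at h hinv
  have hmul : algebraMap F E (c ^ 2 - a ^ 2 - b ^ 2) = algebraMap F E (a * b) * (x + x⁻¹) := by
    simp only [map_sub, map_mul, map_pow]
    linear_combination (algebraMap F E c * y) * hinv
      - (algebraMap F E a + algebraMap F E b * x⁻¹) * h
      + algebraMap F E b ^ 2 * mul_inv_cancel₀ hx0 - algebraMap F E c ^ 2 * mul_inv_cancel₀ hy0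
  have hab : a * b = 0 := by
    by_contra hne
    refine hx ⟨(c ^ 2 - a ^ 2 - b ^ 2) / (a * b), ?_⟩
    rw [map_div₀, hmul, mul_div_cancel_left₀ _ (halg.not.2 hne)]
  have hsq : algebraMap F E c ^ 2 = algebraMap F E a ^ 2 + algebraMap F E b ^ 2 := by
    rw [hab, map_zero, zero_mul] at hmul
    simp only [map_sub, map_pow] at hmul
    linear_combination hmul
  obtain rfl | rfl := mul_eq_zero.1 hab
  · have hprod : algebraMap F E c ^ 2 * (y ^ 2 - x ^ 2) = 0 := by
      simp only [map_zero, zero_add] at h hsq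
      linear_combination (algebraMap F E c * y - algebraMap F E b * x) * h - x ^ 2 * hsq
    have hc : c = 0 := by simpa [sub_eq_zero, hyx] using hprod
    simpa [hc, hx0] using h
  · have hprod : algebraMap F E c ^ 2 * (y ^ 2 - 1) = 0 := by
      simp only [map_zero, zero_mul, add_zero] at h hsq
      linear_combination (algebraMap F E c * y - algebraMap F E a) * h - hsq
    have hc : c = 0 := by simpa [sub_eq_zero, hy] using hprod
    simpa [hc] using h

variable {n : ℕ} [NeZero n]

lemma aeval_polyOf_of_support_subset (hn : 1 < n) {c : ZMod n → F} {j : ZMod n} (hj0 : j ≠ 0)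
    (hj1 : j ≠ 1) (hc : ∀ i, c i ≠ 0 → i = 0 ∨ i = 1 ∨ i = j) (x : E) :
    aeval x (polyOf c) = c 0 • 1 + c 1 • x + c j • x ^ j.val := by
  have : Fact (1 < n) := ⟨hn⟩
  have hsum : ∑ i ∈ {0, 1, j}, c i • x ^ i.val = ∑ i, c i • x ^ i.val := by
    refine Finset.sum_subset (Finset.subset_univ _) fun i _ hi => ?_
    have : c i = 0 := by
      by_contra hci
      exact hi (by simpa using hc i hci)
    rw [this, zero_smul]
  rw [aeval_polyOf, ← hsum, Finset.sum_insert (by simp [hj0.symm]),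
    Finset.sum_insert (by simp [hj1.symm]), Finset.sum_singleton, ZMod.val_zero, pow_zero,
    ZMod.val_one, pow_one, add_assoc]

end Trinomials

section MinimumDistance

variable {n : ℕ} [NeZero n] {F E : Type*} [Field F] [Field E] [Algebra F E] {x : E}

lemma sq_pow_val_eq_one_iff (hodd : Odd n) (hx : orderOf x = n) (j : ZMod n) :
    (x ^ j.val) ^ 2 = 1 ↔ j = 0 := by
  rw [← pow_mul, ← orderOf_dvd_iff_pow_eq_one, hx,
    (Nat.coprime_two_right.2 hodd).dvd_mul_right, ← ZMod.natCast_eq_zero_iff,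
    ZMod.natCast_zmod_val]

lemma eq_zero_of_aeval_polyOf_of_support_subset (hn : 1 < n) (hodd : Odd n)
    (hx : orderOf x = n) (hx_add : x + x⁻¹ ∉ Set.range (algebraMap F E)) {c : ZMod n → F}
    {m j : ZMod n} (hjm : j ≠ m) (hjm1 : j ≠ m + 1)
    (hc : ∀ i, c i ≠ 0 → i = m ∨ i = m + 1 ∨ i = j)
    (h : aeval x (polyOf c) = 0) (hinv : aeval x⁻¹ (polyOf c) = 0) : c = 0 := by
  have : Fact (1 < n) := ⟨hn⟩
  have hxn : x ^ n = 1 := hx ▸ pow_orderOf_eq_one x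
  have hxn' : x⁻¹ ^ n = 1 := by rw [inv_pow, hxn, inv_one]
  have hx0 : x ≠ 0 := (IsUnit.of_pow_eq_one hxn (NeZero.ne n)).ne_zero
  set k := j - m with hk
  have hk0 : k ≠ 0 := sub_ne_zero.2 hjm
  have hk1 : k ≠ 1 := fun h => hjm1 (by rw [← h, hk, add_sub_cancel])
  have hc' : ∀ i, c (i + m) ≠ 0 → i = 0 ∨ i = 1 ∨ i = k := by
    intro i hi
    simpa [hk, add_comm m 1, eq_sub_iff_add_eq] using hc _ hi
  have hpow : (x ^ k.val) ^ 2 ≠ x ^ 2 := by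
    intro heq
    have hval := pow_val_add_of_pow_eq_one hxn (k - 1) 1
    rw [sub_add_cancel, ZMod.val_one, pow_one] at hval
    rw [hval, mul_pow, mul_eq_right₀ (pow_ne_zero 2 hx0), sq_pow_val_eq_one_iff hodd hx] at heq
    exact hk1 (sub_eq_zero.1 heq)
  rw [← aeval_polyOf_shift_eq_zero_iff hxn c m,
    aeval_polyOf_of_support_subset hn hk0 hk1 hc'] at h
  rw [← aeval_polyOf_shift_eq_zero_iff hxn' c m,
    aeval_polyOf_of_support_subset hn hk0 hk1 hc', inv_pow] at hinv
  obtain ⟨h0, h1, hj⟩ := trinomial_coeff_eq_zero hx0 (pow_ne_zero _ hx0) hx_add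
    ((sq_pow_val_eq_one_iff hodd hx k).not.2 hk0) hpow h hinv
  ext i
  by_contra hi
  obtain hi' | hi' | hi' := hc' (i - m) (by simpa using hi) <;>
    rw [← sub_add_cancel i m, hi'] at hi <;> contradiction

variable [DecidableEq F] {g : F[X]}

lemma six_le_pairDist_zero (hn : 5 < n) (hodd : Odd n) (hx : orderOf x = n)
    (hx_add : x + x⁻¹ ∉ Set.range (algebraMap F E)) (hg : g ∣ X ^ n - 1) (hmonic : g.Monic)
    (hdeg : g.natDegree = 4) (hgx : aeval x g = 0) (hgx' : aeval x⁻¹ g = 0)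
    {c : ZMod n → F} (hc : c ∈ cyclicCode n g) (hc0 : c ≠ 0) : 6 ≤ pairDist c 0 := by
  by_contra hlt
  rw [pairDist_zero_right] at hlt
  have hsupp : (Finset.univ.filter fun i => c i ≠ 0).Nonempty := by
    obtain ⟨i, hi⟩ := Function.ne_iff.1 hc0
    exact ⟨i, by simpa using hi⟩
  refine hc0 ?_
  obtain ⟨m, hm⟩ | ⟨m, j, hjm, hjm1, hsub⟩ :=
    window_or_adjacent_pair_of_card_le_five hn hsupp (by lia)
  · exact eq_zero_of_mem_cyclicCode_of_window hg hmonic hc (m := m) (by simpa [hdeg] using hm)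
  · exact eq_zero_of_aeval_polyOf_of_support_subset (by lia) hodd hx hx_add hjm hjm1
      (by simpa [Finset.subset_iff] using hsub) (aeval_eq_zero_of_dvd_aeval_eq_zero hc hgx)
      (aeval_eq_zero_of_dvd_aeval_eq_zero hc hgx')

theorem isMinPairDist_cyclicCode_six (hn : 5 < n) (hodd : Odd n) (hx : orderOf x = n)
    (hx_add : x + x⁻¹ ∉ Set.range (algebraMap F E)) (hg : g ∣ X ^ n - 1) (hmonic : g.Monic)
    (hdeg : g.natDegree = 4) (hgx : aeval x g = 0) (hgx' : aeval x⁻¹ g = 0) :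
    IsMinPairDist (cyclicCode n g : Set (ZMod n → F)) 6 := by
  refine isMinPairDist_of_forall_le (fun c hc hc0 =>
    six_le_pairDist_zero hn hodd hx hx_add hg hmonic hdeg hgx hgx' hc hc0) ?_
  simpa [hdeg] using exists_mem_cyclicCode_pairDist_le hmonic.ne_zero (by lia : g.natDegree < n)

end MinimumDistance

section ReciprocalConjugates

variable {E : Type*} [Field E] {x : E}

/-- The multiset of roots `{x⁻¹ ^ q, x⁻¹, x, x ^ q}` of the generator polynomial. For `x ∈ F_{q²}`
these are the conjugates over `F_q` of `x` and `x⁻¹`. -/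
def reciprocalConjugates (q : ℕ) (x : E) : Multiset E :=
  {x⁻¹ ^ q, x⁻¹, x, x ^ q}

lemma prod_X_sub_C_dvd_X_pow_sub_one {n : ℕ} (hn : 0 < n) {s : Multiset E} (hs : s.Nodup)
    (hpow : ∀ a ∈ s, a ^ n = 1) : (s.map fun a => X - C a).prod ∣ X ^ n - 1 := by
  have hne : (X ^ n - 1 : E[X]) ≠ 0 := X_pow_sub_C_ne_zero hn 1
  rw [Multiset.prod_X_sub_C_dvd_iff_le_roots hne, Multiset.le_iff_subset hs]
  intro a ha
  simp [mem_roots hne, hpow a ha]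

lemma pow_eq_one_of_mem_reciprocalConjugates {q n : ℕ} (hxn : x ^ n = 1) {a : E}
    (ha : a ∈ reciprocalConjugates q x) : a ^ n = 1 := by
  simp only [reciprocalConjugates, Multiset.insert_eq_cons, Multiset.mem_cons,
    Multiset.mem_singleton] at ha
  obtain rfl | rfl | rfl | rfl := ha <;> simp [pow_right_comm _ _ n, hxn]

lemma aeval_eq_zero_of_map_eq_prod_X_sub_C {F : Type*} [CommRing F] [Algebra F E] {g : F[X]}
    {s : Multiset E} (hg : g.map (algebraMap F E) = (s.map fun a => X - C a).prod) {a : E}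
    (ha : a ∈ s) : aeval a g = 0 := by
  rw [← eval_map_algebraMap, hg]
  exact dvd_iff_isRoot.1 (Multiset.dvd_prod (Multiset.mem_map_of_mem _ ha))

end ReciprocalConjugates

section Frobenius

variable {F E : Type*} [Field F] [Fintype F] [Field E] [Algebra F E] {x : E}

lemma mem_range_algebraMap_of_pow_card_eq_self (hx : x ^ Fintype.card F = x) :
    x ∈ Set.range (algebraMap F E) := by
  have hcard : 1 < Fintype.card F := Fintype.one_lt_card
  have hsplits : (X ^ Fintype.card F - X : F[X]).Splits := by
    rw [splits_iff_card_roots, FiniteField.roots_X_pow_card_sub_X,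
      FiniteField.X_pow_card_sub_X_natDegree_eq F hcard]
    rfl
  exact hsplits.mem_range_of_isRoot (FiniteField.X_pow_card_sub_X_ne_zero F hcard)
    (by simp [hx])

lemma mem_lifts_of_map_frobenius_eq {p : E[X]}
    (hp : p.map (FiniteField.frobeniusAlgHom F E : E →+* E) = p) :
    p ∈ lifts (algebraMap F E) := by
  refine (lifts_iff_coeff_lifts p).2 fun k => mem_range_algebraMap_of_pow_card_eq_self ?_
  simpa using congrArg (coeff · k) hp

lemma add_inv_notMem_range_algebraMap (hx : x ^ Fintype.card F ≠ x)
    (hx' : x ^ (Fintype.card F + 1) ≠ 1) : x + x⁻¹ ∉ Set.range (algebraMap F E) := by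
  rintro ⟨z, hz⟩
  have hx0 : x ≠ 0 := by
    rintro rfl
    simp at hx
  have hfix : x ^ Fintype.card F + (x ^ Fintype.card F)⁻¹ = x + x⁻¹ := by
    have := (FiniteField.frobeniusAlgHom F E).commutes z
    rwa [hz, map_add, map_inv₀, FiniteField.frobeniusAlgHom_apply] at this
  have hprod : (x ^ Fintype.card F - x) * (x ^ (Fintype.card F + 1) - 1) = 0 := by
    rw [pow_succ]
    field_simp at hfix
    linear_combination hfix
  exact mul_ne_zero (sub_ne_zero.2 hx) (sub_ne_zero.2 hx') hprod

lemma exists_monic_map_eq_prod_reciprocalConjugates (hx : x ^ Fintype.card F ^ 2 = x) :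
    ∃ g : F[X], g.Monic ∧ g.natDegree = 4 ∧
      g.map (algebraMap F E) =
        ((reciprocalConjugates (Fintype.card F) x).map fun a => X - C a).prod := by
  have hlifts : ((reciprocalConjugates (Fintype.card F) x).map fun a => X - C a).prod ∈
      lifts (algebraMap F E) := by
    refine mem_lifts_of_map_frobenius_eq ?_
    have hx' : (x ^ Fintype.card F) ^ Fintype.card F = x := by rw [← pow_mul, ← sq, hx]
    simp only [reciprocalConjugates, Multiset.insert_eq_cons, Multiset.map_cons,
      Multiset.map_singleton, Multiset.prod_cons, Multiset.prod_singleton, Polynomial.map_mul,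
      Polynomial.map_sub, map_X, map_C, RingHom.coe_coe,
      FiniteField.frobeniusAlgHom_apply, inv_pow, hx']
    ring
  obtain ⟨g, hmap, hdeg, hmonic⟩ := lifts_and_natDegree_eq_and_monic hlifts
    (monic_multisetProd_X_sub_C _)
  refine ⟨g, hmonic, ?_, hmap⟩
  rw [hdeg, natDegree_multiset_prod_X_sub_C_eq_card]
  simp [reciprocalConjugates]

lemma nodup_reciprocalConjugates (hx : x ^ Fintype.card F ≠ x)
    (hx' : x ^ (Fintype.card F + 1) ≠ 1) (hx2 : x ^ 2 ≠ 1) :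
    (reciprocalConjugates (Fintype.card F) x).Nodup := by
  have hx0 : x ≠ 0 := by
    rintro rfl
    simp at hx
  have hxq0 : x ^ Fintype.card F ≠ 0 := pow_ne_zero _ hx0
  have hxq2 : (x ^ Fintype.card F) ^ 2 ≠ 1 := by
    rw [← FiniteField.frobeniusAlgHom_apply F E, ← map_pow]
    exact (map_eq_one_iff _ (FiniteField.frobeniusAlgHom F E).injective).not.2 hx2
  rw [pow_succ] at hx'
  rw [sq] at hx2 hxq2
  simp only [reciprocalConjugates, Multiset.insert_eq_cons, Multiset.nodup_cons,
    Multiset.mem_cons, Multiset.mem_singleton, Multiset.nodup_singleton, inv_pow, not_or,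
    and_true]
  rw [inv_inj, ← mul_eq_one_iff_inv_eq₀ hx0, ← mul_eq_one_iff_inv_eq₀ hx0,
    ← mul_eq_one_iff_inv_eq₀ hxq0, ← mul_eq_one_iff_inv_eq₀ hxq0, mul_comm x (x ^ _)]
  exact ⟨⟨hx, hx', hxq2⟩, ⟨hx2, hx'⟩, hx.symm⟩

lemma exists_cyclicCode_generator {n : ℕ} (hn : 0 < n) (hxn : x ^ n = 1)
    (hx : x ^ Fintype.card F ^ 2 = x) (hnodup : (reciprocalConjugates (Fintype.card F) x).Nodup) :
    ∃ g : F[X], g.Monic ∧ g.natDegree = 4 ∧ g ∣ X ^ n - 1 ∧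
      g.map (algebraMap F E) =
        ((reciprocalConjugates (Fintype.card F) x).map fun a => X - C a).prod := by
  obtain ⟨g, hmonic, hdeg, hmap⟩ := exists_monic_map_eq_prod_reciprocalConjugates hx
  refine ⟨g, hmonic, hdeg, (map_dvd_map' (algebraMap F E)).1 ?_, hmap⟩
  simpa [hmap] using prod_X_sub_C_dvd_X_pow_sub_one hn hnodup fun _ =>
    pow_eq_one_of_mem_reciprocalConjugates hxn

end Frobenius

lemma five_lt_of_dvd_sq_sub_one {n q : ℕ} (hodd : Odd n) (hdvd : n ∣ q ^ 2 - 1)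
    (hsub : ¬ n ∣ q - 1) (hadd : ¬ n ∣ q + 1) : 5 < n := by
  have hprime : ¬ n.Prime := fun hp => by
    rw [← one_pow 2, Nat.sq_sub_sq, hp.dvd_mul] at hdvd
    exact hdvd.elim hadd hsub
  by_contra! hle
  interval_cases n
  · exact absurd hodd (by decide)
  · exact hadd (one_dvd _)
  · exact absurd hodd (by decide)
  · exact hprime Nat.prime_three
  · exact absurd hodd (by decide)
  · exact hprime Nat.prime_five

theorem stmt10_general {q n : ℕ} [NeZero n] {F E : Type*} [Field F] [Fintype F] [DecidableEq F]
    [Field E] [Algebra F E]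
    (hq : Fintype.card F = q) (hodd : Odd n) (hn : ¬ n ∣ q + 1) (hdvd : n ∣ q ^ 2 - 1)
    {δ : E} (hδF : δ ∉ Set.range (algebraMap F E)) (hδ : orderOf δ = n)
    (Code : Set (ZMod n → F))
    (hCode : Code = {c : ZMod n → F |
      ((X - C (δ⁻¹ ^ q)) * (X - C δ⁻¹) * (X - C δ) * (X - C (δ ^ q))) ∣
        (polyOf c).map (algebraMap F E)}) :
    IsMinPairDist Code 6 ∧ Nat.card Code = q ^ (n - 4) := by
  subst hq
  set q := Fintype.card F with hq
  have hpow (t : ℕ) : δ ^ t = 1 ↔ n ∣ t := by rw [← hδ, orderOf_dvd_iff_pow_eq_one]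
  have hfrob : δ ^ q ≠ δ := mt mem_range_algebraMap_of_pow_card_eq_self hδF
  have hadd : δ ^ (q + 1) ≠ 1 := (hpow _).not.2 hn
  have hsub : ¬ n ∣ q - 1 := fun h => hfrob <| by
    rw [← pow_sub_one_mul Fintype.card_ne_zero, (hpow _).2 h, one_mul]
  have h5 : 5 < n := five_lt_of_dvd_sq_sub_one hodd hdvd hsub hn
  have hsq : δ ^ 2 ≠ 1 := (hpow _).not.2 (Nat.not_dvd_of_pos_of_lt two_pos (by lia))
  have hfix : δ ^ q ^ 2 = δ := by
    rw [← pow_sub_one_mul (pow_ne_zero 2 Fintype.card_ne_zero), (hpow _).2 hdvd, one_mul]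
  obtain ⟨g, hmonic, hdeg, hg, hmap⟩ := exists_cyclicCode_generator (by lia)
    ((hpow n).2 dvd_rfl) hfix (nodup_reciprocalConjugates hfrob hadd hsq)
  obtain rfl : Code = cyclicCode n g := by
    ext c
    rw [hCode, Set.mem_ofPred_eq, SetLike.mem_coe, mem_cyclicCode,
      ← map_dvd_map' (algebraMap F E), hmap]
    simp [reciprocalConjugates, mul_assoc, hq]
  have hroot : ∀ a ∈ reciprocalConjugates q δ, aeval a g = 0 := fun a ha =>
    aeval_eq_zero_of_map_eq_prod_X_sub_C hmap ha
  refine ⟨isMinPairDist_cyclicCode_six h5 hodd hδ (add_inv_notMem_range_algebraMap hfrob hadd) hg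
    hmonic hdeg (hroot _ (by simp [reciprocalConjugates]))
    (hroot _ (by simp [reciprocalConjugates])), ?_⟩
  simpa [hdeg] using natCard_cyclicCode hmonic (by lia : g.natDegree ≤ n)

/-- for a prime power `q` and an odd `n` with `n > q+1`, `n | q²−1`,
and `δ ∈ F_{q²}* \ F_q` of order `n`, the cyclic code
`⟨(x−δ^{−q})(x−δ^{−1})(x−δ)(x−δ^q)⟩ ⊆ F_q[x]/(x^n−1)` is an `(n,6)_q` MDS symbol-pair
code: it has minimum pair-distance `6` and exactly `q^{n−4}` codewords. -/
theorem stmt10 {q n : ℕ} [NeZero n] {F E : Type*} [Field F] [Fintype F] [DecidableEq F]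
    [Field E] [Fintype E] [Algebra F E]
    (hq : Fintype.card F = q) (hE : Fintype.card E = q ^ 2)
    (hodd : Odd n) (hn : q + 1 < n) (hdvd : n ∣ q ^ 2 - 1)
    {δ : E} (hδ0 : δ ≠ 0) (hδF : δ ∉ Set.range (algebraMap F E)) (hδ : orderOf δ = n)
    (Code : Set (ZMod n → F))
    (hCode : Code = {c : ZMod n → F |
      ((X - C (δ⁻¹ ^ q)) * (X - C δ⁻¹) * (X - C δ) * (X - C (δ ^ q))) ∣
        (polyOf c).map (algebraMap F E)}) :
    IsMinPairDist Code 6 ∧ Nat.card Code = q ^ (n - 4) := by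
  exact stmt10_general hq hodd (Nat.not_dvd_of_pos_of_lt q.succ_pos hn) hdvd hδF hδ Code hCode
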